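/- Let n ≥ 2, ν a unit vector in ℝⁿ, E ⊆ ν^⊥ an (n−1)-dimensional convex body with 0 ∈ E, and b = −hν for some h > 0. Let C = 𝒞(b, E) be the cone over E with vertex b and C_lat = 𝒞(b, ∂E) its lateral boundary, with ν_C the inner unit normal of C. Then for the Euclidean norm Φ(x) = |x|: ∫_{C_lat} dℋ^{n−1} = ℋ^{n−1}(C_lat) ≥ ω_{n−1} r^{n−2} √(h² + r²), where r > 0 satisfies ω_{n−1} r^{n−1} = ℋ^{n−1}(E) and ω_{n−1} = ℋ^{n−1}(𝔹^{n−1}). -/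

import Mathlib

open MeasureTheory Metric

local notation "⟪" x ", " y "⟫" => @inner ℝ _ _ x y

/-- The cone `𝒞(p, S)`: union of all segments joining `p` to points of `S`. -/
def coneOver {n : ℕ} (p : EuclideanSpace ℝ (Fin n)) (S : Set (EuclideanSpace ℝ (Fin n))) :
    Set (EuclideanSpace ℝ (Fin n)) :=
  {y | ∃ t ∈ Set.Icc (0 : ℝ) 1, ∃ x ∈ S, y = (1 - t) • p + t • x}

/-- Relative boundary of `E` inside the ambient set `P`: the points of `E` that are not
interior to `E` relative to `P`. -/
def relBoundary {n : ℕ} (P E : Set (EuclideanSpace ℝ (Fin n))) :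
    Set (EuclideanSpace ℝ (Fin n)) :=
  E \ {x | ∃ ε > (0 : ℝ), ball x ε ∩ P ⊆ E}

/-!
Let `K = ν^⊥`, choose `x₀` in the relative interior of `E`, write `E = x₀ + A` and let `g` be the
gauge of `A`. The lateral surface contains the image of `A \ {0}` under `x ↦ b + x + g(x) (x₀ - b)`.
Fix a unit vector `u ∈ K` and `σ² + κ² = 1`, `σ > 0`. Projecting this surface orthogonally along a
direction of `span {u, ν}` does not increase `ℋ^{n-1}`, and after a linear change of coordinates
the composition is a shear `x ↦ x + g(x) q` of `K`, injective where `1 + g'(q) > 0` because `g` is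
convex. With `p` the projection of `x₀ - b` to `K`, the area of any piece of the surface is thus at
least the integral of `σ (1 + g'(p)) + κ h g'(u)` over the corresponding piece of `A`; letting the
direction `u` vary from point to point replaces `g'(u)` by `‖g'‖`.

It remains to bound `∫_A ‖g'‖` from below. If `A` has the volume of a ball `B(c, r)`, then
`|A| ≤ ∫_A (r ‖g'‖ + g'(c))`, the first-order form as `ε → 0` of the Brunn–Minkowski inequality
`|τ A + ε B(c, r)| ≥ (τ + ε)^m |A|` applied to all sublevel sets `τ A` of `g`. The choice
`σ = r / √(h² + r²)`, `κ = h / √(h² + r²)` and `c = (r / h)² p` then gives the stated bound.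
Brunn–Minkowski follows from the Prékopa–Leindler inequality, proved by induction on the dimension.
-/

open Set Filter Module
open scoped ENNReal NNReal Topology Pointwise

section PrekopaLeindler

theorem volume_add_volume_le_volume_add_of_isCompact {K L : Set ℝ} (hK : IsCompact K)
    (hL : IsCompact L) (hK₀ : K.Nonempty) (hL₀ : L.Nonempty) :
    volume K + volume L ≤ volume (K + L) := by
  obtain ⟨k, hkK, hk⟩ := hK.exists_isGreatest hK₀
  obtain ⟨l, hlL, hl⟩ := hL.exists_isLeast hL₀
  -- The translates `K + min L` and `max K + L` lie in `K + L` and share only one point.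
  have h_inter : (l +ᵥ K) ∩ (k +ᵥ L) ⊆ {k + l} := by
    rintro _ ⟨⟨x, hx, rfl⟩, y, hy, hxy⟩
    have := hk hx
    have := hl hy
    simp only [vadd_eq_add, mem_singleton_iff] at hxy ⊢
    linarith
  have h_disj : AEDisjoint volume (l +ᵥ K) (k +ᵥ L) := measure_mono_null h_inter (by simp)
  calc volume K + volume L = volume (l +ᵥ K) + volume (k +ᵥ L) := by simp
    _ = volume ((l +ᵥ K) ∪ (k +ᵥ L)) :=
        (measure_union₀ (hL.vadd k).measurableSet.nullMeasurableSet h_disj).symm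
    _ ≤ volume (K + L) := by
        refine measure_mono (union_subset ?_ ?_)
        · rintro _ ⟨x, hx, rfl⟩
          exact ⟨x, hx, l, hlL, add_comm _ _⟩
        · rintro _ ⟨y, hy, rfl⟩
          exact ⟨k, hkK, y, hy, rfl⟩

theorem volume_add_volume_le_volume_add {A B : Set ℝ} (hA : MeasurableSet A)
    (hB : MeasurableSet B) (hA₀ : A.Nonempty) (hB₀ : B.Nonempty) :
    volume A + volume B ≤ volume (A + B) := by
  obtain ⟨a, ha⟩ := hA₀
  obtain ⟨b, hb⟩ := hB₀
  rw [hA.measure_eq_iSup_isCompact, hB.measure_eq_iSup_isCompact]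
  simp only [iSup_and']
  refine ENNReal.biSup_add_biSup_le' ⟨∅, by simp⟩ ⟨∅, by simp⟩ fun K ⟨hKA, hK⟩ L ⟨hLB, hL⟩ ↦ ?_
  calc volume K + volume L ≤ volume (insert a K) + volume (insert b L) := by
        gcongr <;> exact subset_insert _ _
    _ ≤ volume (insert a K + insert b L) :=
        volume_add_volume_le_volume_add_of_isCompact (hK.insert a) (hL.insert b)
          (insert_nonempty _ _) (insert_nonempty _ _)
    _ ≤ volume (A + B) :=
        measure_mono (add_subset_add (insert_subset ha hKA) (insert_subset hb hLB))

theorem lintegral_eq_lintegral_measure_ofReal_lt {α : Type*} [MeasurableSpace α] (μ : Measure α)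
    [SFinite μ] {f : α → ℝ≥0∞} (hf : Measurable f) :
    ∫⁻ x, f x ∂μ = ∫⁻ t in Ioi (0 : ℝ), μ {x | ENNReal.ofReal t < f x} := by
  have h_meas : MeasurableSet {p : α × ℝ | ENNReal.ofReal p.2 < f p.1} :=
    measurableSet_lt (by fun_prop) (by fun_prop)
  have h_slice : ∀ c : ℝ≥0∞, volume.restrict (Ioi 0) {t : ℝ | ENNReal.ofReal t < c} = c := by
    intro c
    rw [Measure.restrict_apply (measurableSet_lt (by fun_prop) measurable_const)]
    induction c with
    | top => simp [Real.volume_Ioi]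
    | coe c =>
      have : {t : ℝ | ENNReal.ofReal t < c} ∩ Ioi 0 = Ioo 0 (c : ℝ) := by
        ext t
        simp only [mem_inter_iff, mem_ofPred_eq, mem_Ioi, mem_Ioo, and_comm (b := 0 < t),
          and_congr_right_iff]
        exact fun ht ↦ ENNReal.ofReal_lt_coe_iff ht.le
      simp [this]
  calc ∫⁻ x, f x ∂μ
      = ∫⁻ x, (∫⁻ t in Ioi (0 : ℝ), {t : ℝ | ENNReal.ofReal t < f x}.indicator 1 t) ∂μ := by
        congr! 2 with x
        rw [lintegral_indicator_one (measurableSet_lt (by fun_prop) measurable_const), h_slice]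
    _ = ∫⁻ t in Ioi (0 : ℝ), ∫⁻ x, {x | ENNReal.ofReal t < f x}.indicator 1 x ∂μ :=
        lintegral_lintegral_swap (measurable_one.indicator h_meas).aemeasurable
    _ = ∫⁻ t in Ioi (0 : ℝ), μ {x | ENNReal.ofReal t < f x} := by
        congr! 2 with t
        exact lintegral_indicator_one (measurableSet_lt measurable_const hf)

variable {a b : ℝ}

theorem ofReal_mul_volume_add_le (ha : 0 < a) (hb : 0 < b) {A B : Set ℝ} (hA : MeasurableSet A)
    (hB : MeasurableSet B) (hA₀ : A.Nonempty) (hB₀ : B.Nonempty) :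
    ENNReal.ofReal a * volume A + ENNReal.ofReal b * volume B ≤ volume (a • A + b • B) := by
  simpa [Measure.addHaar_smul, abs_of_pos ha, abs_of_pos hb] using
    volume_add_volume_le_volume_add (hA.const_smul₀ a) (hB.const_smul₀ b) hA₀.smul_set hB₀.smul_set

theorem ofReal_mul_lintegral_add_le (ha : 0 < a) (hb : 0 < b) {f g h : ℝ → ℝ≥0∞}
    (hf : Measurable f) (hg : Measurable g) (hh : Measurable h) (hsup : ⨆ x, f x = ⨆ x, g x)
    (H : ∀ x y, min (f x) (g y) ≤ h (a • x + b • y)) :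
    ENNReal.ofReal a * (∫⁻ x, f x) + ENNReal.ofReal b * (∫⁻ x, g x) ≤ ∫⁻ x, h x := by
  have h_anti (u : ℝ → ℝ≥0∞) : Antitone fun t ↦ volume {x | ENNReal.ofReal t < u x} :=
    fun s t hst ↦ measure_mono fun x hx ↦ (ENNReal.ofReal_le_ofReal hst).trans_lt hx
  rw [lintegral_eq_lintegral_measure_ofReal_lt _ hf, lintegral_eq_lintegral_measure_ofReal_lt _ hg,
    lintegral_eq_lintegral_measure_ofReal_lt _ hh,
    ← lintegral_const_mul _ (h_anti f).measurable, ← lintegral_const_mul _ (h_anti g).measurable,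
    ← lintegral_add_left ((h_anti f).measurable.const_mul _)]
  refine lintegral_mono fun t ↦ ?_
  rcases lt_or_ge (ENNReal.ofReal t) (⨆ x, f x) with ht | ht
  · refine (ofReal_mul_volume_add_le ha hb (measurableSet_lt measurable_const hf)
      (measurableSet_lt measurable_const hg) (lt_iSup_iff.1 ht)
      (lt_iSup_iff.1 (ht.trans_eq hsup))).trans (measure_mono ?_)
    rintro _ ⟨_, ⟨x, hx, rfl⟩, _, ⟨y, hy, rfl⟩, rfl⟩
    exact (lt_min hx hy).trans_le (H x y)
  · have hf_empty : {x | ENNReal.ofReal t < f x} = ∅ := by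
      simpa [eq_empty_iff_forall_notMem] using iSup_le_iff.1 ht
    have hg_empty : {x | ENNReal.ofReal t < g x} = ∅ := by
      simpa [eq_empty_iff_forall_notMem] using iSup_le_iff.1 (hsup ▸ ht)
    simp [hf_empty, hg_empty]

theorem rpow_mul_rpow_le_ofReal_mul_add (ha : 0 < a) (hb : 0 < b) (hab : a + b = 1) (x y : ℝ≥0∞) :
    x ^ a * y ^ b ≤ ENNReal.ofReal a * x + ENNReal.ofReal b * y := by
  induction x with
  | top => simp [ENNReal.mul_top, ha]
  | coe x =>
    induction y with
    | top => simp [ENNReal.mul_top, hb]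
    | coe y =>
      lift a to ℝ≥0 using ha.le
      lift b to ℝ≥0 using hb.le
      rw [← ENNReal.coe_rpow_of_nonneg _ a.coe_nonneg, ← ENNReal.coe_rpow_of_nonneg _ b.coe_nonneg,
        ENNReal.ofReal_coe_nnreal, ENNReal.ofReal_coe_nnreal]
      exact_mod_cast NNReal.geom_mean_le_arith_mean2_weighted a b x y (by exact_mod_cast hab)

theorem prekopaLeindler_real_of_iSup_ne_top (ha : 0 < a) (hb : 0 < b) (hab : a + b = 1)
    {f g h : ℝ → ℝ≥0∞} (hf : Measurable f) (hg : Measurable g) (hh : Measurable h)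
    (hf_top : ⨆ x, f x ≠ ∞) (hg_top : ⨆ x, g x ≠ ∞)
    (H : ∀ x y, f x ^ a * g y ^ b ≤ h (a • x + b • y)) :
    (∫⁻ x, f x) ^ a * (∫⁻ x, g x) ^ b ≤ ∫⁻ x, h x := by
  set M := ⨆ x, f x
  set N := ⨆ x, g x
  rcases eq_or_ne M 0 with hM | hM
  · simp [fun x ↦ iSup_eq_bot.1 hM x, ENNReal.zero_rpow_of_pos ha]
  rcases eq_or_ne N 0 with hN | hN
  · simp [fun x ↦ iSup_eq_bot.1 hN x, ENNReal.zero_rpow_of_pos hb]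
  have h_div (x y : ℝ≥0∞) :
      (M⁻¹ * x) ^ a * (N⁻¹ * y) ^ b = (M⁻¹ ^ a * N⁻¹ ^ b) * (x ^ a * y ^ b) := by
    rw [ENNReal.mul_rpow_of_nonneg _ _ ha.le, ENNReal.mul_rpow_of_nonneg _ _ hb.le]
    ring
  have h_min (s t : ℝ≥0∞) : min s t ≤ s ^ a * t ^ b := by
    calc min s t = min s t ^ a * min s t ^ b := by
          rw [← ENNReal.rpow_add_of_nonneg _ _ ha.le hb.le, hab, ENNReal.rpow_one]
      _ ≤ s ^ a * t ^ b := by gcongr <;> simp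
  set c := M⁻¹ ^ a * N⁻¹ ^ b
  have hc₀ : c ≠ 0 := by simp [c, hf_top, hg_top, ha.le, hb.le]
  have hc_top : c ≠ ∞ := ENNReal.mul_ne_top
    (ENNReal.rpow_ne_top_of_nonneg ha.le (by simpa))
    (ENNReal.rpow_ne_top_of_nonneg hb.le (by simpa))
  have hsup : ⨆ x, M⁻¹ * f x = ⨆ x, N⁻¹ * g x := by
    rw [← ENNReal.mul_iSup, ← ENNReal.mul_iSup, ENNReal.inv_mul_cancel hM hf_top,
      ENNReal.inv_mul_cancel hN hg_top]
  refine (ENNReal.mul_le_mul_iff_right hc₀ hc_top).1 ?_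
  calc c * ((∫⁻ x, f x) ^ a * (∫⁻ x, g x) ^ b)
      = (M⁻¹ * ∫⁻ x, f x) ^ a * (N⁻¹ * ∫⁻ x, g x) ^ b := (h_div _ _).symm
    _ ≤ ENNReal.ofReal a * (M⁻¹ * ∫⁻ x, f x) + ENNReal.ofReal b * (N⁻¹ * ∫⁻ x, g x) :=
        rpow_mul_rpow_le_ofReal_mul_add ha hb hab _ _
    _ = ENNReal.ofReal a * (∫⁻ x, M⁻¹ * f x) + ENNReal.ofReal b * (∫⁻ x, N⁻¹ * g x) := by
        rw [lintegral_const_mul _ hf, lintegral_const_mul _ hg]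
    _ ≤ ∫⁻ x, c * h x :=
        ofReal_mul_lintegral_add_le ha hb (hf.const_mul _) (hg.const_mul _) (hh.const_mul _) hsup
          fun x y ↦ (h_min _ _).trans <| (h_div _ _).trans_le <| by gcongr; exact H x y
    _ = c * ∫⁻ x, h x := lintegral_const_mul _ hh

theorem tendsto_lintegral_min_natCast {α : Type*} [MeasurableSpace α] {μ : Measure α}
    {f : α → ℝ≥0∞} (hf : AEMeasurable f μ) :
    Tendsto (fun k : ℕ ↦ ∫⁻ x, min (f x) k ∂μ) atTop (𝓝 (∫⁻ x, f x ∂μ)) := by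
  refine lintegral_tendsto_of_tendsto_of_monotone (fun k ↦ hf.min aemeasurable_const)
    (.of_forall fun x i j hij ↦
      min_le_min_left _ (mod_cast hij)) (.of_forall fun x ↦ ?_)
  simpa using tendsto_const_nhds.min ENNReal.tendsto_nat_nhds_top

theorem prekopaLeindler_real (ha : 0 < a) (hb : 0 < b) (hab : a + b = 1)
    {f g h : ℝ → ℝ≥0∞} (hf : Measurable f) (hg : Measurable g) (hh : Measurable h)
    (H : ∀ x y, f x ^ a * g y ^ b ≤ h (a • x + b • y)) :
    (∫⁻ x, f x) ^ a * (∫⁻ x, g x) ^ b ≤ ∫⁻ x, h x := by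
  rcases eq_or_ne (∫⁻ x, f x) 0 with hf₀ | hf₀
  · simp [hf₀, ENNReal.zero_rpow_of_pos ha]
  rcases eq_or_ne (∫⁻ x, g x) 0 with hg₀ | hg₀
  · simp [hg₀, ENNReal.zero_rpow_of_pos hb]
  refine le_of_tendsto' (ENNReal.Tendsto.mul
    ((tendsto_lintegral_min_natCast hf.aemeasurable).ennrpow_const a) (.inl (by simp [hf₀, ha.le]))
    ((tendsto_lintegral_min_natCast hg.aemeasurable).ennrpow_const b) (.inl (by simp [hg₀, hb.le])))
    fun k ↦ ?_
  have h_top (u : ℝ → ℝ≥0∞) : ⨆ x, min (u x) k ≠ ∞ :=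
    ne_top_of_le_ne_top (ENNReal.natCast_ne_top k) (iSup_le fun x ↦ min_le_right _ _)
  refine prekopaLeindler_real_of_iSup_ne_top ha hb hab (hf.min measurable_const)
    (hg.min measurable_const) hh (h_top f) (h_top g) fun x y ↦ le_trans ?_ (H x y)
  gcongr <;> exact min_le_left _ _

theorem lintegral_fin_succ {m : ℕ} {f : (Fin (m + 1) → ℝ) → ℝ≥0∞} (hf : Measurable f) :
    ∫⁻ x, f x = ∫⁻ s : ℝ, ∫⁻ y : Fin m → ℝ, f (Fin.cons s y) := by
  have h_equiv := (volume_preserving_piFinSuccAbove (fun _ : Fin (m + 1) ↦ ℝ) 0).symm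
  have h_cons (p : ℝ × (Fin m → ℝ)) :
      (MeasurableEquiv.piFinSuccAbove (fun _ : Fin (m + 1) ↦ ℝ) 0).symm p = Fin.cons p.1 p.2 := by
    simp [MeasurableEquiv.piFinSuccAbove, Fin.consEquiv]
  rw [← h_equiv.lintegral_comp hf, Measure.volume_eq_prod,
    lintegral_prod _ (by fun_prop)]
  simp only [h_cons]

theorem prekopaLeindler_fin (ha : 0 < a) (hb : 0 < b) (hab : a + b = 1) :
    ∀ (m : ℕ) {f g h : (Fin m → ℝ) → ℝ≥0∞}, Measurable f → Measurable g → Measurable h →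
      (∀ x y, f x ^ a * g y ^ b ≤ h (a • x + b • y)) →
      (∫⁻ x, f x) ^ a * (∫⁻ x, g x) ^ b ≤ ∫⁻ x, h x
  | 0, f, g, h, _, _, _, H => by
    rw [volume_pi, Measure.pi_of_empty _ default]
    simpa only [lintegral_dirac, Subsingleton.elim _ (default : Fin 0 → ℝ)] using H default default
  | m + 1, f, g, h, hf, hg, hh, H => by
    have h_meas : Measurable fun p : ℝ × (Fin m → ℝ) ↦ (Fin.cons p.1 p.2 : Fin (m + 1) → ℝ) :=
      measurable_pi_iff.2 <| Fin.cases measurable_fst fun i ↦ by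
        simp only [Fin.cons_succ]; fun_prop
    rw [lintegral_fin_succ hf, lintegral_fin_succ hg, lintegral_fin_succ hh]
    refine prekopaLeindler_real ha hb hab (hf.comp h_meas).lintegral_prod_right'
      (hg.comp h_meas).lintegral_prod_right' (hh.comp h_meas).lintegral_prod_right' fun s t ↦ ?_
    refine prekopaLeindler_fin ha hb hab m ((hf.comp h_meas).comp measurable_prodMk_left)
      ((hg.comp h_meas).comp measurable_prodMk_left)
      ((hh.comp h_meas).comp measurable_prodMk_left) fun x y ↦ (H _ _).trans_eq ?_
    congr 1
    ext i
    cases i using Fin.cases <;> simp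

variable {E : Type*} [NormedAddCommGroup E] [NormedSpace ℝ E] [FiniteDimensional ℝ E]
  [MeasurableSpace E] [BorelSpace E] (μ : Measure E) [μ.IsAddHaarMeasure]

theorem prekopaLeindler (ha : 0 < a) (hb : 0 < b) (hab : a + b = 1)
    {f g h : E → ℝ≥0∞} (hf : Measurable f) (hg : Measurable g) (hh : Measurable h)
    (H : ∀ x y, f x ^ a * g y ^ b ≤ h (a • x + b • y)) :
    (∫⁻ x, f x ∂μ) ^ a * (∫⁻ x, g x ∂μ) ^ b ≤ ∫⁻ x, h x ∂μ := by
  let e : E ≃L[ℝ] (Fin (finrank ℝ E) → ℝ) := .ofFinrankEq (by simp)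
  obtain ⟨c, hc⟩ : ∃ c : ℝ≥0, μ.map e = c • volume :=
    ⟨_, Measure.isAddLeftInvariant_eq_smul (μ.map e) volume⟩
  have h_map {u : E → ℝ≥0∞} (hu : Measurable u) : ∫⁻ x, u x ∂μ = c * ∫⁻ y, u (e.symm y) := by
    rw [← smul_eq_mul, ← ENNReal.smul_def, ← lintegral_smul_measure, ← hc,
      lintegral_map (by fun_prop) (by fun_prop)]
    simp
  have h_pow : (c : ℝ≥0∞) ^ a * (c : ℝ≥0∞) ^ b = c := by
    rw [← ENNReal.rpow_add_of_nonneg _ _ ha.le hb.le, hab, ENNReal.rpow_one]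
  rw [h_map hf, h_map hg, h_map hh]
  calc (c * ∫⁻ y, f (e.symm y)) ^ a * (c * ∫⁻ y, g (e.symm y)) ^ b
      = (c ^ a * c ^ b) * ((∫⁻ y, f (e.symm y)) ^ a * (∫⁻ y, g (e.symm y)) ^ b) := by
        rw [ENNReal.mul_rpow_of_nonneg _ _ ha.le, ENNReal.mul_rpow_of_nonneg _ _ hb.le]
        ring
    _ ≤ c * ∫⁻ y, h (e.symm y) := by
        rw [h_pow]
        gcongr
        have h_symm := e.symm.continuous.measurable
        exact prekopaLeindler_fin ha hb hab _ (hf.comp h_symm) (hg.comp h_symm) (hh.comp h_symm)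
          fun x y ↦ by simpa using H (e.symm x) (e.symm y)

theorem brunnMinkowski_rpow (ha : 0 < a) (hb : 0 < b) (hab : a + b = 1) {A B : Set E}
    (hA : MeasurableSet A) (hB : MeasurableSet B) :
    μ A ^ a * μ B ^ b ≤ μ (a • A + b • B) := by
  have hC := measurableSet_toMeasurable μ (a • A + b • B)
  have := prekopaLeindler μ ha hb hab (f := A.indicator 1) (g := B.indicator 1)
    (h := (toMeasurable μ (a • A + b • B)).indicator 1) (measurable_one.indicator hA)
    (measurable_one.indicator hB) (measurable_one.indicator hC) fun x y ↦ ?_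
  · simpa only [lintegral_indicator_one, hA, hB, hC, measure_toMeasurable] using this
  by_cases hx : x ∈ A
  · by_cases hy : y ∈ B
    · have := subset_toMeasurable μ _
        (add_mem_add (smul_mem_smul_set (a := a) hx) (smul_mem_smul_set (a := b) hy))
      simp [hx, hy, this]
    · simp [hy, ENNReal.zero_rpow_of_pos hb]
  · simp [hx, ENNReal.zero_rpow_of_pos ha]

theorem ofReal_add_pow_mul_measure_le (ha : 0 < a) (hb : 0 < b) {A B : Set E}
    (hA : MeasurableSet A) (hB : MeasurableSet B) (hAB : μ A = μ B) :
    ENNReal.ofReal ((a + b) ^ finrank ℝ E) * μ A ≤ μ (a • A + b • B) := by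
  have hab : 0 < a + b := add_pos ha hb
  have h_sum : a / (a + b) + b / (a + b) = 1 := by field_simp
  have h_smul : (a + b) • ((a / (a + b)) • A + (b / (a + b)) • B) = a • A + b • B := by
    simp only [smul_add, smul_smul, mul_div_cancel₀ _ hab.ne']
  calc ENNReal.ofReal ((a + b) ^ finrank ℝ E) * μ A
      = ENNReal.ofReal ((a + b) ^ finrank ℝ E) *
          (μ A ^ (a / (a + b)) * μ B ^ (b / (a + b))) := by
        rw [← hAB, ← ENNReal.rpow_add_of_nonneg _ _ (by positivity) (by positivity), h_sum,
          ENNReal.rpow_one]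
    _ ≤ ENNReal.ofReal ((a + b) ^ finrank ℝ E) *
          μ ((a / (a + b)) • A + (b / (a + b)) • B) := by
        gcongr
        exact brunnMinkowski_rpow μ (by positivity) (by positivity) h_sum hA hB
    _ = μ (a • A + b • B) := by
        rw [← h_smul, Measure.addHaar_smul, abs_of_pos (by positivity)]

end PrekopaLeindler

section Gauge

variable {E : Type*} [NormedAddCommGroup E] [NormedSpace ℝ E]

theorem convexOn_add_fderiv_sub_le {s : Set E} {f : E → ℝ} (hf : ConvexOn ℝ s f) {x y : E}
    (hx : x ∈ s) (hy : y ∈ s) (hfx : DifferentiableAt ℝ f x) :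
    f x + fderiv ℝ f x (y - x) ≤ f y := by
  have h_line : HasDerivAt (fun t : ℝ ↦ f (AffineMap.lineMap x y t)) (fderiv ℝ f x (y - x)) 0 := by
    have h_at : HasFDerivAt f (fderiv ℝ f x) (AffineMap.lineMap x y (0 : ℝ)) := by
      simpa using hfx.hasFDerivAt
    exact h_at.comp_hasDerivAt 0 AffineMap.hasDerivAt_lineMap
  have := (hf.comp_affineMap (AffineMap.lineMap x y)).le_slope_of_hasDerivAt
    (by simpa using hx) (by simpa using hy) zero_lt_one h_line
  simp only [slope_def_field, Function.comp_apply, AffineMap.lineMap_apply_one,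
    AffineMap.lineMap_apply_zero] at this
  linarith

variable {A : Set E}

theorem convexOn_gauge (hA : Convex ℝ A) (hA_abs : Absorbent ℝ A) : ConvexOn ℝ univ (gauge A) :=
  ⟨convex_univ, fun x _ y _ a b ha hb _ ↦ by
    simpa only [gauge_smul_of_nonneg ha, gauge_smul_of_nonneg hb] using
      gauge_add_le hA hA_abs (a • x) (b • y)⟩

theorem gauge_le_iff_mem_smul (hA : Convex ℝ A) (hA_closed : IsClosed A) (hA₀ : A ∈ 𝓝 0) {τ : ℝ}
    (hτ : 0 < τ) {x : E} : gauge A x ≤ τ ↔ x ∈ τ • A := by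
  rw [mem_smul_set_iff_inv_smul_mem₀ hτ.ne', ← hA_closed.closure_eq,
    ← gauge_le_one_iff_mem_closure hA hA₀, hA_closed.closure_eq,
    gauge_smul_of_nonneg (inv_nonneg.2 hτ.le), smul_eq_mul, inv_mul_le_one₀ hτ]

variable [FiniteDimensional ℝ E] [MeasurableSpace E] [BorelSpace E] (μ : Measure E)
  [μ.IsAddHaarMeasure]

theorem measure_setOf_gauge_le (hA : Convex ℝ A) (hA_closed : IsClosed A) (hA₀ : A ∈ 𝓝 0)
    {τ : ℝ} (hτ : 0 < τ) :
    μ {x | gauge A x ≤ τ} = ENNReal.ofReal (τ ^ finrank ℝ E) * μ A := by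
  simp only [gauge_le_iff_mem_smul hA hA_closed hA₀ hτ, ofPred_mem_eq, Measure.addHaar_smul,
    abs_of_pos (pow_pos hτ _)]

theorem ae_differentiableAt_gauge (hA : Convex ℝ A) (hA₀ : A ∈ 𝓝 0) :
    ∀ᵐ x ∂μ, DifferentiableAt ℝ (gauge A) x := by
  obtain ⟨K, hK⟩ := hA.lipschitz_gauge hA₀
  exact hK.ae_differentiableAt

theorem measure_setOf_gauge_eq_one (hA : Convex ℝ A) (hA₀ : A ∈ 𝓝 0) :
    μ {x | gauge A x = 1} = 0 := by
  simpa only [gauge_eq_one_iff_mem_frontier hA hA₀, ofPred_mem_eq] using hA.addHaar_frontier μ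

end Gauge

section MinkowskiInequality

theorem lintegral_ofReal_one_sub {α : Type*} [MeasurableSpace α] (μ : Measure α) {u : α → ℝ}
    (hu : Measurable u) :
    ∫⁻ x, ENNReal.ofReal (1 - u x) ∂μ = ∫⁻ t in Ioi (0 : ℝ), μ {x | u x ≤ 1 - t} := by
  have h_max (x : α) : ENNReal.ofReal (1 - u x) = ENNReal.ofReal (max (1 - u x) 0) := by simp
  simp_rw [h_max]
  rw [lintegral_eq_lintegral_meas_le μ (f := fun x ↦ max (1 - u x) 0)
    (.of_forall fun x ↦ le_max_right _ _) (by fun_prop)]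
  refine setLIntegral_congr_fun measurableSet_Ioi fun t (ht : 0 < t) ↦ ?_
  congr! 3 with x
  simp [ht.not_ge, le_sub_comm]

theorem lintegral_Ioo_mul_one_sub_pow {m : ℕ} (hm : m ≠ 0) {ε : ℝ} (hε : 0 ≤ ε) :
    ∫⁻ t in Ioo (0 : ℝ) 1, ENNReal.ofReal (m * (1 - t) ^ (m - 1) * ε) = ENNReal.ofReal ε := by
  rw [← ofReal_integral_eq_lintegral_ofReal, ← integral_Ioc_eq_integral_Ioo,
    ← intervalIntegral.integral_of_le zero_le_one]
  · congr 1
    rw [intervalIntegral.integral_mul_const, intervalIntegral.integral_const_mul,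
      intervalIntegral.integral_comp_sub_left (fun t ↦ t ^ (m - 1)), integral_pow]
    have : (m : ℝ) ≠ 0 := mod_cast hm
    simp [Nat.cast_pred (Nat.pos_of_ne_zero hm)]
    field_simp
  · have h_cont : Continuous fun t : ℝ ↦ m * (1 - t) ^ (m - 1) * ε := by fun_prop
    exact h_cont.integrableOn_Icc.mono_set Ioo_subset_Icc_self
  · refine ae_restrict_of_forall_mem measurableSet_Ioo fun t ht ↦ ?_
    have := sub_nonneg.2 ht.2.le
    simp only [Pi.zero_apply]
    positivity

variable {E : Type*} [NormedAddCommGroup E] [NormedSpace ℝ E] [FiniteDimensional ℝ E]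
  [MeasurableSpace E] [BorelSpace E] {μ : Measure E} [μ.IsAddHaarMeasure] {A B : Set E} {s : E → ℝ}

theorem ofReal_add_pow_mul_measure_le_of_fderiv_gauge_le (hA : Convex ℝ A) (hA_closed : IsClosed A)
    (hA₀ : A ∈ 𝓝 0) (hB : MeasurableSet B) (hAB : μ A = μ B)
    (hs : ∀ᵐ x ∂μ, ∀ y ∈ B, fderiv ℝ (gauge A) x y ≤ s x) {τ ε : ℝ} (hτ : 0 < τ) (hε : 0 < ε) :
    ENNReal.ofReal ((τ + ε) ^ finrank ℝ E) * μ A ≤ μ {x | gauge A x - ε * s x ≤ τ} := by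
  refine (ofReal_add_pow_mul_measure_le μ hτ hε hA_closed.measurableSet hB hAB).trans
    (measure_mono_ae ?_)
  filter_upwards [hs, ae_differentiableAt_gauge μ hA hA₀] with x hsx hx
  rintro ⟨z, hz, _, ⟨y, hy, rfl⟩, h_add⟩
  have h_sub : z - x = -(ε • y) := by simp [← h_add]
  have h_conv := convexOn_add_fderiv_sub_le (convexOn_gauge hA (absorbent_nhds_zero hA₀))
    (mem_univ _) (mem_univ z) hx
  have h_bound := mul_le_mul_of_nonneg_left (hsx y hy) hε.le
  rw [h_sub, map_neg, map_smul, smul_eq_mul] at h_conv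
  have hzτ := (gauge_le_iff_mem_smul hA hA_closed hA₀ hτ).2 hz
  change gauge A x - ε * s x ≤ τ
  linarith

theorem lintegral_one_sub_gauge_add_le [Nontrivial E] (hA : Convex ℝ A) (hA_closed : IsClosed A)
    (hA₀ : A ∈ 𝓝 0) (hB : MeasurableSet B) (hAB : μ A = μ B) (hs_meas : Measurable s)
    (hs : ∀ᵐ x ∂μ, ∀ y ∈ B, fderiv ℝ (gauge A) x y ≤ s x) {ε : ℝ} (hε : 0 < ε) :
    ∫⁻ x, ENNReal.ofReal (1 - gauge A x) ∂μ + ENNReal.ofReal ε * μ A ≤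
      ∫⁻ x, ENNReal.ofReal (1 - (gauge A x - ε * s x)) ∂μ := by
  have hg := (continuous_gauge hA hA₀).measurable
  set m := finrank ℝ E
  have h_empty (t : ℝ) (ht : t ∈ Ioi 1) : μ {x | gauge A x ≤ 1 - t} = 0 := by
    have : {x | gauge A x ≤ 1 - t} = ∅ := eq_empty_of_forall_notMem fun x hx ↦ by
      linarith [gauge_nonneg (s := A) x, mem_Ioi.1 ht, show gauge A x ≤ 1 - t from hx]
    simp [this]
  have h_gauge : ∫⁻ x, ENNReal.ofReal (1 - gauge A x) ∂μ =
      ∫⁻ t in Ioo (0 : ℝ) 1, ENNReal.ofReal ((1 - t) ^ m) * μ A := by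
    rw [lintegral_ofReal_one_sub μ hg, ← Ioc_union_Ioi_eq_Ioi zero_le_one,
      lintegral_union measurableSet_Ioi (Ioc_disjoint_Ioi le_rfl),
      setLIntegral_congr_fun measurableSet_Ioi h_empty, lintegral_zero, add_zero,
      setLIntegral_congr Ioo_ae_eq_Ioc.symm]
    exact setLIntegral_congr_fun measurableSet_Ioo fun t ht ↦
      measure_setOf_gauge_le μ hA hA_closed hA₀ (sub_pos.2 ht.2)
  calc ∫⁻ x, ENNReal.ofReal (1 - gauge A x) ∂μ + ENNReal.ofReal ε * μ A
      = ∫⁻ t in Ioo (0 : ℝ) 1, (ENNReal.ofReal ((1 - t) ^ m) * μ A +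
          ENNReal.ofReal (m * (1 - t) ^ (m - 1) * ε) * μ A) := by
        rw [h_gauge, lintegral_add_left (by fun_prop), lintegral_mul_const _ (by fun_prop),
          lintegral_mul_const _ (by fun_prop), lintegral_Ioo_mul_one_sub_pow finrank_pos.ne' hε.le]
    _ ≤ ∫⁻ t in Ioo (0 : ℝ) 1, μ {x | gauge A x - ε * s x ≤ 1 - t} := by
        refine setLIntegral_mono' measurableSet_Ioo fun t ht ↦ ?_
        have ht' : 0 < 1 - t := sub_pos.2 ht.2
        rw [← add_mul, ← ENNReal.ofReal_add (by positivity) (by positivity)]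
        refine le_trans ?_ (ofReal_add_pow_mul_measure_le_of_fderiv_gauge_le hA hA_closed hA₀ hB hAB
          hs ht' hε)
        gcongr
        exact pow_add_mul_le_add_pow ht'.le (by linarith) m
    _ ≤ ∫⁻ x, ENNReal.ofReal (1 - (gauge A x - ε * s x)) ∂μ := by
        rw [lintegral_ofReal_one_sub μ (by fun_prop)]
        exact lintegral_mono_set Ioo_subset_Ioi_self

theorem ofReal_one_sub_add_indicator_le {α : Type*} {g s : α → ℝ} {M ε : ℝ} {x : α}
    (hs : |s x| ≤ M) (hε : 0 ≤ ε) :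
    ENNReal.ofReal (1 - (g x - ε * s x)) +
        {x | g x ≤ 1}.indicator (fun _ ↦ ENNReal.ofReal (ε * M)) x ≤
      ENNReal.ofReal (1 - g x) +
        {x | g x ≤ 1}.indicator (fun x ↦ ENNReal.ofReal (ε * (s x + M))) x +
        {x | |1 - g x| ≤ ε * M}.indicator (fun _ ↦ ENNReal.ofReal (ε * M)) x := by
  have h_upper := mul_le_mul_of_nonneg_left (abs_le.1 hs).2 hε
  have h_lower := mul_le_mul_of_nonneg_left (abs_le.1 hs).1 hε
  have hM : 0 ≤ ε * M := mul_nonneg hε ((abs_nonneg _).trans hs)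
  have h_add : 0 ≤ ε * (s x + M) := by linarith
  simp only [indicator_apply, mem_ofPred_eq]
  by_cases hg : g x ≤ 1
  · have hg' : 0 ≤ 1 - g x := sub_nonneg.2 hg
    simp only [hg, if_true, abs_of_nonneg hg']
    rw [← ENNReal.ofReal_add hg' h_add]
    split_ifs with hd
    · gcongr
      linarith
    · rw [← ENNReal.ofReal_add (by linarith) hM, add_zero]
      exact ENNReal.ofReal_le_ofReal (by linarith)
  · simp only [hg, if_false, add_zero]
    refine le_add_left ?_
    split_ifs with hd
    · gcongr
      linarith
    · rw [abs_of_neg (by linarith)] at hd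
      rw [ENNReal.ofReal_of_nonpos (by linarith)]

theorem measure_add_le_setLIntegral_add [Nontrivial E] (hA : Convex ℝ A) (hA_compact : IsCompact A)
    (hA₀ : A ∈ 𝓝 0) (hB : MeasurableSet B) (hAB : μ A = μ B) (hs_meas : Measurable s)
    (hs : ∀ᵐ x ∂μ, ∀ y ∈ B, fderiv ℝ (gauge A) x y ≤ s x) {M : ℝ} (hM : ∀ x, |s x| ≤ M)
    {ε : ℝ} (hε : 0 < ε) :
    μ A + ENNReal.ofReal M * μ A ≤ ∫⁻ x in A, ENNReal.ofReal (s x + M) ∂μ +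
      ENNReal.ofReal M * μ {x | |1 - gauge A x| ≤ ε * M} := by
  have hg := (continuous_gauge hA hA₀).measurable
  have hA_gauge : {x | gauge A x ≤ 1} = A := by
    ext x
    simp [gauge_le_one_iff_mem_closure hA hA₀, hA_compact.isClosed.closure_eq]
  have h_meas : MeasurableSet {x | |1 - gauge A x| ≤ ε * M} :=
    measurableSet_le (by fun_prop) measurable_const
  have h_fin : ∫⁻ x, ENNReal.ofReal (1 - gauge A x) ∂μ ≠ ∞ := by
    refine ne_top_of_le_ne_top (hA_compact.measure_lt_top (μ := μ)).ne ?_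
    rw [← lintegral_indicator_one hA_compact.measurableSet]
    refine lintegral_mono fun x ↦ ?_
    by_cases hx : x ∈ A
    · simp [hx, gauge_nonneg]
    · have : 1 < gauge A x := not_le.1 fun h ↦ hx (hA_gauge.subset h)
      simp [hx, this.le]
  have h_le := lintegral_mono (μ := μ) fun x ↦
    ofReal_one_sub_add_indicator_le (g := gauge A) (x := x) (hM x) hε.le
  simp only [hA_gauge] at h_le
  rw [lintegral_add_left (by fun_prop), lintegral_add_right _ (measurable_const.indicator h_meas),
    lintegral_add_left (by fun_prop), lintegral_indicator_const hA_compact.measurableSet,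
    lintegral_indicator_const h_meas, lintegral_indicator hA_compact.measurableSet] at h_le
  have h_le' := (add_le_add_left (lintegral_one_sub_gauge_add_le hA hA_compact.isClosed hA₀ hB hAB
    hs_meas hs hε) _).trans h_le
  simp only [ENNReal.ofReal_mul hε.le, add_assoc] at h_le'
  rw [lintegral_const_mul _ (by fun_prop), ENNReal.add_le_add_iff_left h_fin] at h_le'
  refine (ENNReal.mul_le_mul_iff_right (ENNReal.ofReal_pos.2 hε).ne' ENNReal.ofReal_ne_top).1 ?_
  simpa only [mul_add, mul_assoc] using h_le'

theorem tendsto_measure_abs_one_sub_gauge_le (hA : Convex ℝ A) (hA_compact : IsCompact A)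
    (hA₀ : A ∈ 𝓝 0) {M : ℝ} (hM : 0 ≤ M) :
    Tendsto (fun ε : ℝ ↦ μ {x | |1 - gauge A x| ≤ ε * M}) (𝓝[>] 0) (𝓝 0) := by
  have hg := (continuous_gauge hA hA₀).measurable
  have h_inter : ⋂ ε > (0 : ℝ), {x | |1 - gauge A x| ≤ ε * M} ⊆ {x | gauge A x = 1} := by
    intro x hx
    simp only [mem_iInter, mem_ofPred_eq] at hx ⊢
    have h_lim : Tendsto (fun ε : ℝ ↦ ε * M) (𝓝[>] 0) (𝓝 0) :=
      ((continuous_mul_const M).tendsto' 0 0 (zero_mul M)).mono_left nhdsWithin_le_nhds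
    have := ge_of_tendsto h_lim (eventually_mem_nhdsWithin.mono fun ε hε ↦ hx ε hε)
    linarith [abs_nonpos_iff.1 this]
  rw [← measure_mono_null h_inter (measure_setOf_gauge_eq_one μ hA hA₀)]
  refine tendsto_measure_biInter_gt
    (fun ε _ ↦ (measurableSet_le (by fun_prop) measurable_const).nullMeasurableSet)
    (fun ε δ _ hεδ x hx ↦ le_trans hx (mul_le_mul_of_nonneg_right hεδ hM)) ⟨1, one_pos, ?_⟩
  refine ne_top_of_le_ne_top ?_ (measure_mono (t := {x | gauge A x ≤ 1 + M}) fun x hx ↦ ?_)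
  · rw [measure_setOf_gauge_le μ hA hA_compact.isClosed hA₀ (by positivity)]
    exact ENNReal.mul_ne_top ENNReal.ofReal_ne_top hA_compact.measure_lt_top.ne
  · have := (abs_le.1 (show |1 - gauge A x| ≤ 1 * M from hx)).1
    change gauge A x ≤ 1 + M
    linarith

theorem measureReal_le_setIntegral_of_fderiv_gauge_le [Nontrivial E] (hA : Convex ℝ A)
    (hA_compact : IsCompact A) (hA₀ : A ∈ 𝓝 0) (hB : MeasurableSet B) (hAB : μ A = μ B)
    (hs_meas : Measurable s) (hs : ∀ᵐ x ∂μ, ∀ y ∈ B, fderiv ℝ (gauge A) x y ≤ s x) {M : ℝ}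
    (hM : ∀ x, |s x| ≤ M) :
    μ.real A ≤ ∫ x in A, s x ∂μ := by
  have hM₀ : 0 ≤ M := (abs_nonneg _).trans (hM 0)
  have hA_top := (hA_compact.measure_lt_top (μ := μ)).ne
  have h_int : IntegrableOn s A μ :=
    .of_bound hA_compact.measure_lt_top hs_meas.aestronglyMeasurable M (.of_forall hM)
  have h_int_add : IntegrableOn (fun x ↦ s x + M) A μ := h_int.add (integrableOn_const hA_top)
  have h_lim : Tendsto (fun ε : ℝ ↦ ∫⁻ x in A, ENNReal.ofReal (s x + M) ∂μ +
      ENNReal.ofReal M * μ {x | |1 - gauge A x| ≤ ε * M}) (𝓝[>] 0)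
      (𝓝 (∫⁻ x in A, ENNReal.ofReal (s x + M) ∂μ)) := by
    simpa using tendsto_const_nhds.add (ENNReal.Tendsto.const_mul
      (tendsto_measure_abs_one_sub_gauge_le (μ := μ) hA hA_compact hA₀ hM₀)
      (.inr ENNReal.ofReal_ne_top))
  have h_le := ge_of_tendsto h_lim (eventually_mem_nhdsWithin.mono fun ε hε ↦
    measure_add_le_setLIntegral_add hA hA_compact hA₀ hB hAB hs_meas hs hM hε)
  rw [← ofReal_integral_eq_lintegral_ofReal h_int_add
    (.of_forall fun x ↦ by simpa using neg_le_iff_add_nonneg.1 (abs_le.1 (hM x)).1),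
    integral_add h_int (integrableOn_const hA_top), setIntegral_const, ← ofReal_measureReal hA_top,
    ← ENNReal.ofReal_mul hM₀, ← ENNReal.ofReal_add measureReal_nonneg (by positivity),
    smul_eq_mul, mul_comm M] at h_le
  have h_pos : 0 < μ.real A :=
    ENNReal.toReal_pos (Measure.measure_pos_of_mem_nhds μ hA₀).ne' hA_top
  have h_le_real := (ENNReal.ofReal_le_ofReal_iff'.1 h_le).resolve_right
    (by nlinarith)
  linarith

theorem measureReal_le_setIntegral_fderiv_gauge [Nontrivial E] (hA : Convex ℝ A)
    (hA_compact : IsCompact A) (hA₀ : A ∈ 𝓝 0) {c : E} {r : ℝ} (hr : 0 ≤ r)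
    (hAr : μ A = μ (closedBall c r)) :
    μ.real A ≤ ∫ x in A, (r * ‖fderiv ℝ (gauge A) x‖ + fderiv ℝ (gauge A) x c) ∂μ := by
  obtain ⟨K, hK⟩ := hA.lipschitz_gauge hA₀
  have h_norm (x : E) : ‖fderiv ℝ (gauge A) x‖ ≤ K := norm_fderiv_le_of_lipschitz ℝ hK
  refine measureReal_le_setIntegral_of_fderiv_gauge_le hA hA_compact hA₀ measurableSet_closedBall
    hAr (by fun_prop) (.of_forall fun x y hy ↦ ?_) (M := r * K + K * ‖c‖) fun x ↦ ?_
  · rw [← sub_le_iff_le_add, ← map_sub]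
    calc fderiv ℝ (gauge A) x (y - c) ≤ ‖fderiv ℝ (gauge A) x‖ * ‖y - c‖ :=
          (Real.le_norm_self _).trans (ContinuousLinearMap.le_opNorm _ _)
      _ ≤ r * ‖fderiv ℝ (gauge A) x‖ := by
          rw [mul_comm]
          gcongr
          exact mem_closedBall_iff_norm.1 hy
  · simp only [← Real.norm_eq_abs]
    refine norm_add_le_of_le ?_ ((ContinuousLinearMap.le_opNorm _ _).trans ?_)
    · rw [Real.norm_of_nonneg (by positivity)]
      gcongr
      exact h_norm x
    · gcongr
      exact h_norm x

end MinkowskiInequality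

section MeasureBounds

theorem withDensity_iSup_le {α : Type*} [MeasurableSpace α] {μ ρ : Measure α}
    {f : ℕ → α → ℝ≥0∞} (hf : ∀ i, Measurable (f i)) (h_le : ∀ i, μ.withDensity (f i) ≤ ρ) :
    μ.withDensity (⨆ i, f i) ≤ ρ := by
  have h_meas (n : ℕ) : Measurable (partialSups f n) := by
    induction n with
    | zero => simpa using hf 0
    | succ n ih => simpa using ih.sup (hf (n + 1))
  have h_partial (n : ℕ) : μ.withDensity (partialSups f n) ≤ ρ := by
    induction n with
    | zero => simpa using h_le 0
    | succ n ih =>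
      refine Measure.le_iff.2 fun S hS ↦ ?_
      have h_ge := measurableSet_le (h_meas n) (hf (n + 1))
      have h_lt := measurableSet_lt (hf (n + 1)) (h_meas n)
      rw [partialSups_add_one, withDensity_apply _ hS]
      simp only [Pi.sup_apply]
      rw [setLIntegral_max (h_meas n) (hf (n + 1)), ← withDensity_apply _ (hS.inter h_ge),
        ← withDensity_apply _ (hS.inter h_lt)]
      refine (add_le_add (h_le (n + 1) _) (ih _)).trans_eq ?_
      rw [← measure_inter_add_sdiff S h_ge, sdiff_eq, compl_ofPred]
      simp only [not_le]
  refine Measure.le_iff.2 fun S hS ↦ ?_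
  rw [← iSup_partialSups_eq f, withDensity_apply _ hS]
  simp only [iSup_apply]
  rw [lintegral_iSup h_meas fun m n hmn ↦ (partialSups f).monotone hmn]
  refine iSup_le fun n ↦ ?_
  rw [← withDensity_apply _ hS]
  exact h_partial n S

theorem ofReal_integral_le_lintegral_ofReal {α : Type*} [MeasurableSpace α] {μ : Measure α}
    {f : α → ℝ} (hf : Integrable f μ) :
    ENNReal.ofReal (∫ x, f x ∂μ) ≤ ∫⁻ x, ENNReal.ofReal (f x) ∂μ := by
  calc ENNReal.ofReal (∫ x, f x ∂μ) ≤ ENNReal.ofReal (∫ x, max (f x) 0 ∂μ) :=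
        ENNReal.ofReal_le_ofReal (integral_mono hf hf.pos_part fun x ↦ le_max_left _ _)
    _ = ∫⁻ x, ENNReal.ofReal (f x) ∂μ := by
        rw [ofReal_integral_eq_lintegral_ofReal hf.pos_part (.of_forall fun x ↦ le_max_right _ _)]
        simp

end MeasureBounds

section Shear

variable {E : Type*} [NormedAddCommGroup E] [NormedSpace ℝ E] {g : E → ℝ} {q : E} {S : Set E}

theorem injOn_add_smul_of_convexOn (hg : ConvexOn ℝ univ g)
    (hS : ∀ x ∈ S, DifferentiableAt ℝ g x) (h_pos : ∀ x ∈ S, 0 < 1 + fderiv ℝ g x q) :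
    InjOn (fun x ↦ x + g x • q) S := by
  have h_le (x) (hx : x ∈ S) (y) (h_eq : x + g x • q = y + g y • q) : g x ≤ g y := by
    have h_conv := convexOn_add_fderiv_sub_le hg (mem_univ x) (mem_univ y) (hS x hx)
    have h_sub : y - x = (g x - g y) • q := by
      rw [sub_smul, sub_eq_sub_iff_add_eq_add, ← h_eq, add_comm]
    rw [h_sub, map_smul, smul_eq_mul] at h_conv
    nlinarith [h_pos x hx]
  intro x hx y hy h_eq
  have h_val : g x = g y := (h_le x hx y h_eq).antisymm (h_le y hy x h_eq.symm)
  simpa [h_val] using h_eq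

variable [FiniteDimensional ℝ E] [MeasurableSpace E] [BorelSpace E] (μ : Measure E)
  [μ.IsAddHaarMeasure]

theorem measure_image_add_smul_of_convexOn (hg : ConvexOn ℝ univ g) (hS_meas : MeasurableSet S)
    (hS : ∀ x ∈ S, DifferentiableAt ℝ g x) (h_pos : ∀ x ∈ S, 0 < 1 + fderiv ℝ g x q) :
    μ ((fun x ↦ x + g x • q) '' S) = ∫⁻ x in S, ENNReal.ofReal (1 + fderiv ℝ g x q) ∂μ := by
  have h_deriv (x) (hx : x ∈ S) : HasFDerivWithinAt (fun x ↦ x + g x • q)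
      (.id ℝ E + (fderiv ℝ g x).smulRight q) S x :=
    ((hasFDerivAt_id x).add ((hS x hx).hasFDerivAt.smul_const q)).hasFDerivWithinAt
  rw [← lintegral_abs_det_fderiv_eq_addHaar_image μ hS_meas h_deriv
    (injOn_add_smul_of_convexOn hg hS h_pos)]
  refine setLIntegral_congr_fun hS_meas fun x hx ↦ ?_
  have h_det : (.id ℝ E + (fderiv ℝ g x).smulRight q : E →L[ℝ] E).det = 1 + fderiv ℝ g x q :=
    LinearMap.transvection.det (fderiv ℝ g x).toLinearMap q
  simp only [h_det, abs_of_pos (h_pos x hx)]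

end Shear

section TiltedProjection

variable {W : Type*} [NormedAddCommGroup W] [InnerProductSpace ℝ W] (K : Submodule ℝ W)
  [K.HasOrthogonalProjection] (ν : W) (u : K) (σ κ : ℝ)

/-- For unit vectors `u : K` and `ν ∈ Kᗮ` and `σ² + κ² = 1`: the orthogonal projection of `W` onto
`(K ∩ u^⊥) ⊕ ℝ (σ u + κ ν)`, followed by the identification of that subspace with `K` which sends
`σ u + κ ν` to `u`. -/
noncomputable def tiltedProjection : W →L[ℝ] K :=
  K.orthogonalProjectionOnto + ((σ - 1) • (innerSL ℝ u).comp K.orthogonalProjectionOnto +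
    κ • innerSL ℝ ν).smulRight u

variable {K ν u σ κ}

theorem tiltedProjection_apply (w : W) :
    tiltedProjection K ν u σ κ w = K.orthogonalProjectionOnto w +
      ((σ - 1) * ⟪u, K.orthogonalProjectionOnto w⟫ + κ * ⟪ν, w⟫) • u := rfl

theorem norm_tiltedProjection_apply_le (hν : ν ∈ Kᗮ) (hν₁ : ‖ν‖ = 1) (hu : ‖u‖ = 1)
    (hσκ : σ ^ 2 + κ ^ 2 = 1) (w : W) : ‖tiltedProjection K ν u σ κ w‖ ≤ ‖w‖ := by
  set p := K.orthogonalProjectionOnto w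
  have h_ν : ⟪ν, w⟫ ^ 2 ≤ ‖Kᗮ.orthogonalProjectionOnto w‖ ^ 2 := by
    have h_eq : ⟪ν, w⟫ = ⟪(⟨ν, hν⟩ : Kᗮ), Kᗮ.orthogonalProjectionOnto w⟫ :=
      (Submodule.inner_orthogonalProjectionOnto_eq_of_mem_left ⟨ν, hν⟩ w).symm
    rw [h_eq, sq_le_sq, abs_norm]
    simpa [hν₁] using abs_real_inner_le_norm (⟨ν, hν⟩ : Kᗮ) (Kᗮ.orthogonalProjectionOnto w)
  have h_cauchy : (σ * ⟪u, p⟫ + κ * ⟪ν, w⟫) ^ 2 ≤ ⟪u, p⟫ ^ 2 + ⟪ν, w⟫ ^ 2 := by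
    nlinarith [sq_nonneg (σ * ⟪ν, w⟫ - κ * ⟪u, p⟫)]
  rw [← sq_le_sq₀ (norm_nonneg _) (norm_nonneg _), Submodule.norm_sq_eq_add_norm_sq_projection w K,
    tiltedProjection_apply, norm_add_sq_real, inner_smul_right, norm_smul, hu, real_inner_comm u,
    mul_one, Real.norm_eq_abs, sq_abs]
  linear_combination h_ν + h_cauchy

theorem tiltedProjection_coe_add_smul (hν : ν ∈ Kᗮ) (hu : ‖u‖ = 1) (hσ : σ ≠ 0)
    (x : K) (v : W) (t : ℝ) :
    tiltedProjection K ν u σ κ (x + t • v) = LinearMap.transvection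
      ((σ - 1) • (innerSL ℝ u).toLinearMap) u
      (x + t • (K.orthogonalProjectionOnto v + (κ * ⟪ν, v⟫ / σ) • u)) := by
  have hx : ⟪ν, x⟫ = 0 := Submodule.inner_left_of_mem_orthogonal x.2 hν
  have huu : ⟪u, u⟫ = 1 := by simp [hu]
  simp only [tiltedProjection_apply, LinearMap.transvection.apply, map_add, map_smul,
    Submodule.orthogonalProjectionOnto_mem_subspace_eq_self, hx, LinearMap.smul_apply,
    ContinuousLinearMap.coe_coe, innerSL_apply_apply, huu, smul_eq_mul]
  match_scalars <;> field_simp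
  ring

end TiltedProjection

section LateralArea

variable {W : Type*} [NormedAddCommGroup W] [InnerProductSpace ℝ W] [MeasurableSpace W]
  [BorelSpace W] {K : Submodule ℝ W} [FiniteDimensional ℝ K] {ν v b : W} {g : K → ℝ} {σ κ : ℝ}

theorem lintegral_le_hausdorffMeasure_image_of_pos (hν : ν ∈ Kᗮ) (hν₁ : ‖ν‖ = 1)
    (hg : ConvexOn ℝ univ g) (hσ : 0 < σ) (hσκ : σ ^ 2 + κ ^ 2 = 1) {u : K} (hu : ‖u‖ = 1)
    {S : Set K} (hS_meas : MeasurableSet S) (hS : ∀ x ∈ S, DifferentiableAt ℝ g x)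
    (h_pos : ∀ x ∈ S, 0 < σ * (1 + fderiv ℝ g x (K.orthogonalProjectionOnto v)) +
      κ * ⟪ν, v⟫ * fderiv ℝ g x u) :
    ∫⁻ x in S, ENNReal.ofReal (σ * (1 + fderiv ℝ g x (K.orthogonalProjectionOnto v)) +
      κ * ⟪ν, v⟫ * fderiv ℝ g x u) ∂μH[finrank ℝ K] ≤
      μH[finrank ℝ K] ((fun x : K ↦ b + x + g x • v) '' S) := by
  set q : K := K.orthogonalProjectionOnto v + (κ * ⟪ν, v⟫ / σ) • u with hq
  set T : K →ₗ[ℝ] K := LinearMap.transvection ((σ - 1) • (innerSL ℝ u).toLinearMap) u with hT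
  have h_coef (x : K) : σ * (1 + fderiv ℝ g x (K.orthogonalProjectionOnto v)) +
      κ * ⟪ν, v⟫ * fderiv ℝ g x u = σ * (1 + fderiv ℝ g x q) := by
    simp only [hq, map_add, map_smul, smul_eq_mul]
    field_simp
    ring
  have hT_det : LinearMap.det T = σ := by simp [hT, LinearMap.transvection.det, hu]
  have h_image : tiltedProjection K ν u σ κ '' ((fun x : K ↦ b + x + g x • v) '' S) =
      (tiltedProjection K ν u σ κ b + ·) '' (T '' ((fun x ↦ x + g x • q) '' S)) := by
    simp only [image_image, add_assoc, map_add _ b, tiltedProjection_coe_add_smul hν hu hσ.ne',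
      hT, hq]
  have h_lip : LipschitzWith 1 (tiltedProjection K ν u σ κ) :=
    (tiltedProjection K ν u σ κ).lipschitz.weaken <|
      ContinuousLinearMap.opNorm_le_bound _ zero_le_one fun w ↦ by
        simpa using norm_tiltedProjection_apply_le hν hν₁ hu hσκ w
  simp only [h_coef, mul_pos_iff_of_pos_left hσ] at h_pos ⊢
  calc ∫⁻ x in S, ENNReal.ofReal (σ * (1 + fderiv ℝ g x q)) ∂μH[finrank ℝ K]
      = ENNReal.ofReal σ * μH[finrank ℝ K] ((fun x ↦ x + g x • q) '' S) := by
        simp only [ENNReal.ofReal_mul hσ.le]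
        rw [lintegral_const_mul _ (by fun_prop),
          measure_image_add_smul_of_convexOn _ hg hS_meas hS h_pos]
    _ = μH[finrank ℝ K] (tiltedProjection K ν u σ κ '' ((fun x : K ↦ b + x + g x • v) '' S)) := by
        rw [h_image, image_add_left, measure_preimage_add, Measure.addHaar_image_linearMap, hT_det,
          abs_of_pos hσ]
    _ ≤ μH[finrank ℝ K] ((fun x : K ↦ b + x + g x • v) '' S) := by
        simpa using h_lip.hausdorffMeasure_image_le (Nat.cast_nonneg _) _

theorem lintegral_le_hausdorffMeasure_image (hν : ν ∈ Kᗮ) (hν₁ : ‖ν‖ = 1)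
    (hg : ConvexOn ℝ univ g) {C : ℝ≥0} (hg_lip : LipschitzWith C g) (hσ : 0 < σ)
    (hσκ : σ ^ 2 + κ ^ 2 = 1) {u : K} (hu : ‖u‖ = 1) {S : Set K} (hS : MeasurableSet S) :
    ∫⁻ x in S, ENNReal.ofReal (σ * (1 + fderiv ℝ g x (K.orthogonalProjectionOnto v)) +
      κ * ⟪ν, v⟫ * fderiv ℝ g x u) ∂μH[finrank ℝ K] ≤
      μH[finrank ℝ K] ((fun x : K ↦ b + x + g x • v) '' S) := by
  set F : K → ℝ := fun x ↦ σ * (1 + fderiv ℝ g x (K.orthogonalProjectionOnto v)) +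
    κ * ⟪ν, v⟫ * fderiv ℝ g x u
  have hF : Measurable F := by fun_prop
  have h_pos : MeasurableSet {x | 0 < F x} := measurableSet_lt measurable_const hF
  have h_diff := measurableSet_of_differentiableAt ℝ g
  calc ∫⁻ x in S, ENNReal.ofReal (F x) ∂μH[finrank ℝ K]
      = ∫⁻ x in S ∩ {x | DifferentiableAt ℝ g x} ∩ {x | 0 < F x},
          ENNReal.ofReal (F x) ∂μH[finrank ℝ K] := by
        have h_ae : S =ᵐ[μH[finrank ℝ K]] (S ∩ {x | DifferentiableAt ℝ g x} : Set K) :=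
          (inter_ae_eq_left_of_ae_eq_univ (eventuallyEq_univ.2 hg_lip.ae_differentiableAt)).symm
        have h_nonpos : ∫⁻ x in (S ∩ {x | DifferentiableAt ℝ g x}) \ {x | 0 < F x},
            ENNReal.ofReal (F x) ∂μH[finrank ℝ K] = 0 :=
          setLIntegral_eq_zero ((hS.inter h_diff).diff h_pos) fun x hx ↦
            ENNReal.ofReal_of_nonpos (not_lt.1 hx.2)
        rw [setLIntegral_congr h_ae, ← lintegral_inter_add_sdiff _ _ h_pos, h_nonpos, add_zero]
    _ ≤ μH[finrank ℝ K] ((fun x : K ↦ b + x + g x • v) ''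
          (S ∩ {x | DifferentiableAt ℝ g x} ∩ {x | 0 < F x})) :=
        lintegral_le_hausdorffMeasure_image_of_pos hν hν₁ hg hσ hσκ hu
          ((hS.inter h_diff).inter h_pos) (fun x hx ↦ hx.1.2) fun x hx ↦ hx.2
    _ ≤ μH[finrank ℝ K] ((fun x : K ↦ b + x + g x • v) '' S) :=
        measure_mono (image_mono fun x hx ↦ hx.1.1)

theorem exists_norm_eq_one_and_apply_eq_norm {F : Type*} [NormedAddCommGroup F]
    [InnerProductSpace ℝ F] [CompleteSpace F] [Nontrivial F] (f : F →L[ℝ] ℝ) :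
    ∃ u : F, ‖u‖ = 1 ∧ f u = ‖f‖ := by
  rcases eq_or_ne f 0 with rfl | hf
  · simpa using exists_norm_eq F zero_le_one
  · set w := (InnerProductSpace.toDual ℝ F).symm f with hw
    have hw_norm : ‖w‖ = ‖f‖ := LinearIsometryEquiv.norm_map _ _
    have hf' : ‖f‖ ≠ 0 := norm_ne_zero_iff.2 hf
    refine ⟨‖w‖⁻¹ • w, by simp [norm_smul, hw_norm, hf'], ?_⟩
    rw [← InnerProductSpace.toDual_symm_apply, ← hw, inner_smul_right, real_inner_self_eq_norm_sq,
      hw_norm]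
    field_simp

theorem measurableEmbedding_add_smul (hν : ν ∈ Kᗮ) (hv : ⟪ν, v⟫ ≠ 0) (hg : Continuous g) :
    MeasurableEmbedding fun x : K ↦ b + x + g x • v := by
  refine Continuous.measurableEmbedding (by fun_prop) fun x y h_eq ↦ ?_
  have h_inner := congr_arg (⟪ν, ·⟫) h_eq
  simp only [inner_add_right, inner_smul_right, Submodule.inner_left_of_mem_orthogonal x.2 hν,
    Submodule.inner_left_of_mem_orthogonal y.2 hν, add_zero, add_right_inj,
    mul_left_inj' hv] at h_inner
  simpa [h_inner] using h_eq

theorem lintegral_norm_fderiv_le_hausdorffMeasure_image [Nontrivial K] (hν : ν ∈ Kᗮ)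
    (hν₁ : ‖ν‖ = 1) (hv : ⟪ν, v⟫ ≠ 0) (hg : ConvexOn ℝ univ g) {C : ℝ≥0}
    (hg_lip : LipschitzWith C g) (hσ : 0 < σ) (hσκ : σ ^ 2 + κ ^ 2 = 1) {S : Set K}
    (hS : MeasurableSet S) :
    ∫⁻ x in S, ENNReal.ofReal (σ * (1 + fderiv ℝ g x (K.orthogonalProjectionOnto v)) +
      κ * ⟪ν, v⟫ * ‖fderiv ℝ g x‖) ∂μH[finrank ℝ K] ≤
      μH[finrank ℝ K] ((fun x : K ↦ b + x + g x • v) '' S) := by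
  set F : K → K → ℝ≥0∞ := fun u x ↦ ENNReal.ofReal (σ * (1 + fderiv ℝ g x
    (K.orthogonalProjectionOnto v)) + κ * ⟪ν, v⟫ * fderiv ℝ g x u)
  have h_emb := measurableEmbedding_add_smul (b := b) hν hv hg_lip.continuous
  have : Nonempty (sphere (0 : K) 1) := (NormedSpace.sphere_nonempty.2 zero_le_one).to_subtype
  set e : ℕ → sphere (0 : K) 1 := TopologicalSpace.denseSeq _
  have h_dir (i : ℕ) : μH[finrank ℝ K].withDensity (F (e i)) ≤
      μH[finrank ℝ K].comap fun x : K ↦ b + x + g x • v := by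
    refine Measure.le_iff.2 fun S hS ↦ ?_
    rw [withDensity_apply _ hS, h_emb.comap_apply]
    exact lintegral_le_hausdorffMeasure_image hν hν₁ hg hg_lip hσ hσκ (by simp) hS
  have h_sup := withDensity_iSup_le (fun i ↦ by fun_prop) h_dir S
  rw [withDensity_apply _ hS, h_emb.comap_apply] at h_sup
  refine (lintegral_mono fun x ↦ ?_).trans h_sup
  obtain ⟨u, hu, hfu⟩ := exists_norm_eq_one_and_apply_eq_norm (fderiv ℝ g x)
  have h_closed : IsClosed {w : sphere (0 : K) 1 | F w x ≤ (⨆ i, F (e i)) x} :=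
    isClosed_le (ENNReal.continuous_ofReal.comp (by fun_prop)) continuous_const
  have h_range : range e ⊆ {w : sphere (0 : K) 1 | F w x ≤ (⨆ i, F (e i)) x} := by
    rintro _ ⟨i, rfl⟩
    exact le_iSup (fun i ↦ F (e i)) i x
  rw [← hfu]
  exact h_closed.closure_subset_iff.2 h_range
    (TopologicalSpace.denseRange_denseSeq _ ⟨u, by simpa using hu⟩)

end LateralArea

section Cone

theorem ofReal_div_mul_measureReal_le_lintegral {F : Type*} [NormedAddCommGroup F]
    [NormedSpace ℝ F] [FiniteDimensional ℝ F] [Nontrivial F] [MeasurableSpace F] [BorelSpace F]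
    {μ : Measure F} [μ.IsAddHaarMeasure] {A : Set F} (hA : Convex ℝ A) (hA_compact : IsCompact A)
    (hA₀ : A ∈ 𝓝 0) {h r w : ℝ} (hh : 0 < h) (hr : 0 < r) (hw : 0 < w)
    (h_sq : w ^ 2 = h ^ 2 + r ^ 2) (hAr : μ A = μ (closedBall 0 r)) (p : F) :
    ENNReal.ofReal (w / r * μ.real A) ≤ ∫⁻ x in A, ENNReal.ofReal
      (r / w * (1 + fderiv ℝ (gauge A) x p) + h / w * h * ‖fderiv ℝ (gauge A) x‖) ∂μ := by
  obtain ⟨C, hC⟩ := hA.lipschitz_gauge hA₀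
  have hA_top := (hA_compact.measure_lt_top (μ := μ)).ne
  -- This center makes `r ‖g'‖ + g' c` proportional to the nonconstant part of the integrand.
  set c : F := (r ^ 2 / h ^ 2) • p with hc
  set s : F → ℝ := fun x ↦ r * ‖fderiv ℝ (gauge A) x‖ + fderiv ℝ (gauge A) x c with hs
  have h_eq (x : F) : r / w * (1 + fderiv ℝ (gauge A) x p) +
      h / w * h * ‖fderiv ℝ (gauge A) x‖ = r / w + h ^ 2 / (r * w) * s x := by
    simp only [hs, hc, map_smul, smul_eq_mul]
    field_simp
    ring
  have h_int : IntegrableOn s A μ := by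
    refine .of_bound hA_compact.measure_lt_top (by fun_prop) (r * C + C * ‖c‖)
      (.of_forall fun x ↦ norm_add_le_of_le ?_ ?_)
    · rw [norm_mul, norm_norm, Real.norm_of_nonneg hr.le]
      gcongr
      exact norm_fderiv_le_of_lipschitz ℝ hC
    · refine (ContinuousLinearMap.le_opNorm _ _).trans ?_
      gcongr
      exact norm_fderiv_le_of_lipschitz ℝ hC
  have h_int_const : IntegrableOn (fun _ ↦ r / w) A μ := integrableOn_const hA_top
  have h_minkowski : μ.real A ≤ ∫ x in A, s x ∂μ :=
    measureReal_le_setIntegral_fderiv_gauge hA hA_compact hA₀ hr.le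
      (hAr.trans (Measure.addHaar_closedBall_center μ c r).symm)
  simp only [h_eq]
  refine (ENNReal.ofReal_le_ofReal ?_).trans
    (ofReal_integral_le_lintegral_ofReal (h_int_const.add (h_int.const_mul _)))
  calc w / r * μ.real A = r / w * μ.real A + h ^ 2 / (r * w) * μ.real A := by
        field_simp
        linear_combination μ.real A * h_sq
    _ ≤ r / w * μ.real A + h ^ 2 / (r * w) * ∫ x in A, s x ∂μ := by gcongr
    _ = ∫ x in A, (r / w + h ^ 2 / (r * w) * s x) ∂μ := by
        rw [integral_add h_int_const (h_int.const_mul _), setIntegral_const, integral_const_mul,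
          smul_eq_mul, mul_comm (r / w)]

theorem nonempty_interior_of_measure_ne_zero {F : Type*} [NormedAddCommGroup F] [NormedSpace ℝ F]
    [FiniteDimensional ℝ F] [MeasurableSpace F] [BorelSpace F] (μ : Measure F) [μ.IsAddHaarMeasure]
    {D : Set F} (hD : Convex ℝ D) (h_ne : μ D ≠ 0) : (interior D).Nonempty := by
  by_contra! h_empty
  refine h_ne (measure_mono_null subset_closure ?_)
  simpa [frontier, h_empty] using hD.addHaar_frontier μ

theorem hausdorffMeasure_closedBall_zero_eq_of_finrank_eq {V W : Type*} [NormedAddCommGroup V]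
    [InnerProductSpace ℝ V] [FiniteDimensional ℝ V] [MeasurableSpace V] [BorelSpace V]
    [NormedAddCommGroup W] [InnerProductSpace ℝ W] [FiniteDimensional ℝ W] [MeasurableSpace W]
    [BorelSpace W] (h_eq : finrank ℝ V = finrank ℝ W) (d r : ℝ) :
    μH[d] (closedBall (0 : V) r) = μH[d] (closedBall (0 : W) r) := by
  set e : V ≃ₗᵢ[ℝ] W := (stdOrthonormalBasis ℝ V).equiv (stdOrthonormalBasis ℝ W) (finCongr h_eq)
  rw [← e.isometry.hausdorffMeasure_image (.inr e.surjective), e.image_closedBall, map_zero]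

variable {n : ℕ} {ν b : EuclideanSpace ℝ (Fin n)} {K : Submodule ℝ (EuclideanSpace ℝ (Fin n))}

theorem image_gauge_subset_coneOver_relBoundary {A : Set K} (hA : Convex ℝ A)
    (hA_compact : IsCompact A) (hA₀ : A ∈ 𝓝 0) (x₀ : K) (b : EuclideanSpace ℝ (Fin n)) :
    (fun x : K ↦ b + x + gauge A x • (x₀ - b)) '' (A \ {0}) ⊆
      coneOver b (relBoundary K ((fun x : K ↦ (x₀ + x : EuclideanSpace ℝ (Fin n))) '' A)) := by
  rintro _ ⟨x, ⟨hxA, hx⟩, rfl⟩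
  have h_bdd : Bornology.IsVonNBounded ℝ A :=
    NormedSpace.isVonNBounded_of_isBounded ℝ hA_compact.isBounded
  have h_pos : 0 < gauge A x := (gauge_pos (absorbent_nhds_zero hA₀) h_bdd).2 hx
  set y := (gauge A x)⁻¹ • x with hy
  have hxy : gauge A x • y = x := smul_inv_smul₀ h_pos.ne' x
  have hy_gauge : gauge A y = 1 := by
    rw [hy, gauge_smul_of_nonneg (by positivity), smul_eq_mul, inv_mul_cancel₀ h_pos.ne']
  have hy_mem : y ∈ frontier A := (gauge_eq_one_iff_mem_frontier hA hA₀).1 hy_gauge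
  refine ⟨gauge A x, ⟨h_pos.le, gauge_le_one_of_mem hxA⟩, x₀ + y,
    ⟨⟨y, hA_compact.isClosed.frontier_subset hy_mem, rfl⟩, ?_⟩, ?_⟩
  · rintro ⟨ε, hε, h_ball⟩
    refine hy_mem.2 (mem_interior_iff_mem_nhds.2 (Metric.mem_nhds_iff.2 ⟨ε, hε, fun z hz ↦ ?_⟩))
    have hz_ball : (x₀ + z : EuclideanSpace ℝ (Fin n)) ∈ ball ↑(x₀ + y) ε := by
      simpa [Subtype.dist_eq] using hz
    obtain ⟨z', hz', h_eq⟩ := h_ball ⟨hz_ball, (x₀ + z).2⟩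
    rwa [← Subtype.ext (add_left_cancel h_eq)]
  · have hxy' : (gauge A x • y : EuclideanSpace ℝ (Fin n)) = x := congr_arg Subtype.val hxy
    simp only [← hxy']
    module

theorem ofReal_sqrt_div_mul_measureReal_le_hausdorffMeasure_coneOver [Nontrivial K] (hν : ν ∈ Kᗮ)
    (hν₁ : ‖ν‖ = 1) (hb : ⟪ν, b⟫ < 0) {D : Set K} (hD : Convex ℝ D) (hD_compact : IsCompact D)
    {r : ℝ} (hr : 0 < r) (hDr : μH[finrank ℝ K] D = μH[finrank ℝ K] (closedBall (0 : K) r)) :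
    ENNReal.ofReal (√(⟪ν, b⟫ ^ 2 + r ^ 2) / r * (μH[finrank ℝ K] : Measure K).real D) ≤
      μH[finrank ℝ K] (coneOver b (relBoundary K ((↑) '' D))) := by
  obtain ⟨x₀, hx₀⟩ := nonempty_interior_of_measure_ne_zero μH[finrank ℝ K] hD
    (hDr ▸ (measure_closedBall_pos _ _ hr).ne')
  rw [mem_interior_iff_mem_nhds] at hx₀
  set A : Set K := (x₀ + ·) ⁻¹' D
  have hA : Convex ℝ A := hD.translate_preimage_right x₀
  have hA_compact : IsCompact A := (Homeomorph.addLeft x₀).isCompact_preimage.2 hD_compact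
  have hA₀ : A ∈ 𝓝 0 := (continuous_const_add x₀).continuousAt.preimage_mem_nhds (by simpa)
  have hA_measure : μH[finrank ℝ K] A = μH[finrank ℝ K] D := measure_preimage_add _ _ _
  have hA_image : (fun x : K ↦ (x₀ + x : EuclideanSpace ℝ (Fin n))) '' A = (↑) '' D := by
    rw [← image_preimage_eq D (add_left_surjective x₀), image_image]
    rfl
  obtain ⟨C, hC⟩ := hA.lipschitz_gauge hA₀
  set w := √(⟪ν, b⟫ ^ 2 + r ^ 2)
  have hw : 0 < w := by positivity
  have h_height : ⟪ν, x₀ - b⟫ = -⟪ν, b⟫ := by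
    rw [inner_sub_right, Submodule.inner_left_of_mem_orthogonal x₀.2 hν, zero_sub]
  have h_sq : w ^ 2 = ⟪ν, x₀ - b⟫ ^ 2 + r ^ 2 := by
    rw [h_height, neg_sq, Real.sq_sqrt (by positivity)]
  have h_pos : 0 < ⟪ν, x₀ - b⟫ := by linarith
  have h_coef : (r / w) ^ 2 + (⟪ν, x₀ - b⟫ / w) ^ 2 = 1 := by
    rw [div_pow, div_pow, ← add_div, h_sq, add_comm, div_self (by positivity)]
  calc ENNReal.ofReal (w / r * (μH[finrank ℝ K] : Measure K).real D)
      = ENNReal.ofReal (w / r * (μH[finrank ℝ K] : Measure K).real A) := by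
        rw [measureReal_def, measureReal_def, hA_measure]
    _ ≤ ∫⁻ x in A, ENNReal.ofReal
          (r / w * (1 + fderiv ℝ (gauge A) x (K.orthogonalProjectionOnto (x₀ - b))) +
            ⟪ν, x₀ - b⟫ / w * ⟪ν, x₀ - b⟫ * ‖fderiv ℝ (gauge A) x‖) ∂μH[finrank ℝ K] :=
        ofReal_div_mul_measureReal_le_lintegral hA hA_compact hA₀ h_pos hr hw h_sq
          (hA_measure.trans hDr) _
    _ = ∫⁻ x in A \ {0}, ENNReal.ofReal
          (r / w * (1 + fderiv ℝ (gauge A) x (K.orthogonalProjectionOnto (x₀ - b))) +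
            ⟪ν, x₀ - b⟫ / w * ⟪ν, x₀ - b⟫ * ‖fderiv ℝ (gauge A) x‖) ∂μH[finrank ℝ K] :=
        setLIntegral_congr (sdiff_null_ae_eq_self (measure_singleton 0)).symm
    _ ≤ μH[finrank ℝ K] ((fun x : K ↦ b + x + gauge A x • (x₀ - b)) '' (A \ {0})) :=
        lintegral_norm_fderiv_le_hausdorffMeasure_image hν hν₁ h_pos.ne'
          (convexOn_gauge hA (absorbent_nhds_zero hA₀)) hC (by positivity) h_coef
          (hA_compact.measurableSet.diff (measurableSet_singleton 0))
    _ ≤ μH[finrank ℝ K] (coneOver b (relBoundary K ((↑) '' D))) :=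
        measure_mono (hA_image ▸ image_gauge_subset_coneOver_relBoundary hA hA_compact hA₀ x₀ b)

theorem ofReal_measureReal_mul_le_hausdorffMeasure_coneOver [Nontrivial K] (hν : ν ∈ Kᗮ)
    (hν₁ : ‖ν‖ = 1) (hb : ⟪ν, b⟫ < 0) {D : Set K} (hD : Convex ℝ D) (hD_compact : IsCompact D)
    {r : ℝ} (hr : 0 < r) (hDr : (μH[finrank ℝ K] : Measure K).real D =
      (μH[finrank ℝ K] : Measure K).real (closedBall 0 1) * r ^ finrank ℝ K) :
    ENNReal.ofReal ((μH[finrank ℝ K] : Measure K).real (closedBall 0 1) *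
      r ^ (finrank ℝ K - 1) * √(⟪ν, b⟫ ^ 2 + r ^ 2)) ≤
      μH[finrank ℝ K] (coneOver b (relBoundary K ((↑) '' D))) := by
  have h_ball : μH[finrank ℝ K] D = μH[finrank ℝ K] (closedBall (0 : K) r) := by
    rw [← ENNReal.toReal_eq_toReal_iff' hD_compact.measure_lt_top.ne measure_closedBall_lt_top.ne,
      Measure.addHaar_closedBall' _ _ hr.le, ENNReal.toReal_mul,
      ENNReal.toReal_ofReal (by positivity), mul_comm]
    exact hDr
  refine le_of_eq_of_le ?_ (ofReal_sqrt_div_mul_measureReal_le_hausdorffMeasure_coneOver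
    hν hν₁ hb hD hD_compact hr h_ball)
  rw [hDr, ← pow_sub_one_mul finrank_pos.ne' r]
  field_simp

end Cone

theorem euclidean_cone_lateral_area_lower_bound_general
    (n : ℕ) (hn : 2 ≤ n)
    (ν : EuclideanSpace ℝ (Fin n)) (hν : ‖ν‖ = 1)
    (E : Set (EuclideanSpace ℝ (Fin n)))
    (hEcp : IsCompact E) (hEcv : Convex ℝ E)
    (hEsub : E ⊆ {x : EuclideanSpace ℝ (Fin n) | ⟪x, ν⟫ = 0})
    (h : ℝ) (hh : 0 < h)
    (b : EuclideanSpace ℝ (Fin n)) (hb : ⟪b, ν⟫ = -h)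
    (ω : ℝ)
    (hω : ω = (μH[(n : ℝ) - 1]
      (closedBall (0 : EuclideanSpace ℝ (Fin (n - 1))) 1)).toReal)
    (r : ℝ) (hr : 0 < r)
    (hrE : ω * r ^ (n - 1) = (μH[(n : ℝ) - 1] E).toReal) :
    ENNReal.ofReal (ω * r ^ (n - 2) * Real.sqrt (h ^ 2 + r ^ 2)) ≤
      μH[(n : ℝ) - 1]
        (coneOver b (relBoundary {x : EuclideanSpace ℝ (Fin n) | ⟪x, ν⟫ = 0} E)) := by
  set K : Submodule ℝ (EuclideanSpace ℝ (Fin n)) := (ℝ ∙ ν)ᗮ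
  have hK_coe : {x | ⟪x, ν⟫ = 0} = (K : Set (EuclideanSpace ℝ (Fin n))) := by
    ext x
    exact Submodule.mem_orthogonal_singleton_iff_inner_left.symm
  have : Fact (finrank ℝ (EuclideanSpace ℝ (Fin n)) = n - 1 + 1) := ⟨by simp; omega⟩
  have hK : finrank ℝ K = n - 1 :=
    Submodule.finrank_orthogonal_span_singleton (norm_ne_zero_iff.1 (by simp [hν]))
  have : Nontrivial K := nontrivial_of_finrank_pos (R := ℝ) (by omega)
  have h_dim : (n : ℝ) - 1 = finrank ℝ K := by rw [hK, Nat.cast_pred (by omega)]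
  set D : Set K := K.subtype ⁻¹' E
  have hD_image : ((↑) : K → EuclideanSpace ℝ (Fin n)) '' D = E :=
    image_preimage_eq_of_subset (by simpa [← hK_coe] using hEsub)
  have hD_measure : μH[finrank ℝ K] D = μH[finrank ℝ K] E :=
    (K.subtypeₗᵢ.isometry.hausdorffMeasure_image (.inl (Nat.cast_nonneg _)) D).symm.trans
      (congr_arg _ hD_image)
  rw [h_dim] at hω hrE ⊢
  rw [hausdorffMeasure_closedBall_zero_eq_of_finrank_eq (W := K) (by simp [hK]),
    ← measureReal_def] at hω
  have h_cone := ofReal_measureReal_mul_le_hausdorffMeasure_coneOver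
    (Submodule.le_orthogonal_orthogonal _ (Submodule.mem_span_singleton_self ν)) hν
    (by rw [real_inner_comm]; linarith) (hEcv.linear_preimage K.subtype)
    (K.closed_of_finiteDimensional.isClosedEmbedding_subtypeVal.isCompact_preimage hEcp) hr
    (by rw [measureReal_def, hD_measure, ← hrE, hω, hK])
  rwa [hD_image, real_inner_comm, hb, neg_sq, ← hω, ← hK_coe,
    show finrank ℝ K - 1 = n - 2 by omega] at h_cone

/-- Euclidean cone lemma: the lateral area of the cone of height `h` over an
`(n-1)`-dimensional convex body `E ⊆ ν^⊥` with `0 ∈ E` is at least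
`ω_{n-1} r^{n-2} √(h² + r²)`, where `ω_{n-1} r^{n-1} = ℋ^{n-1}(E)`. -/
theorem euclidean_cone_lateral_area_lower_bound
    (n : ℕ) (hn : 2 ≤ n)
    (ν : EuclideanSpace ℝ (Fin n)) (hν : ‖ν‖ = 1)
    (E : Set (EuclideanSpace ℝ (Fin n)))
    (hEcp : IsCompact E) (hEcv : Convex ℝ E) (h0E : (0 : EuclideanSpace ℝ (Fin n)) ∈ E)
    (hEsub : E ⊆ {x : EuclideanSpace ℝ (Fin n) | ⟪x, ν⟫ = 0})
    (hEdim : affineSpan ℝ E = affineSpan ℝ {x : EuclideanSpace ℝ (Fin n) | ⟪x, ν⟫ = 0})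
    (h : ℝ) (hh : 0 < h)
    (b : EuclideanSpace ℝ (Fin n)) (hb : b = -h • ν)
    (ω : ℝ)
    (hω : ω = (μH[(n : ℝ) - 1]
      (closedBall (0 : EuclideanSpace ℝ (Fin (n - 1))) 1)).toReal)
    (r : ℝ) (hr : 0 < r)
    (hrE : ω * r ^ (n - 1) = (μH[(n : ℝ) - 1] E).toReal) :
    ENNReal.ofReal (ω * r ^ (n - 2) * Real.sqrt (h ^ 2 + r ^ 2)) ≤
      μH[(n : ℝ) - 1]
        (coneOver b (relBoundary {x : EuclideanSpace ℝ (Fin n) | ⟪x, ν⟫ = 0} E)) :=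
  euclidean_cone_lateral_area_lower_bound_general n hn ν hν E hEcp hEcv hEsub h hh b
    (by simp [hb, inner_smul_left, hν]) ω hω r hr hrE
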